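/- arXiv:1410.1232 — 2 statements merged into one kernel-verified Lean document; each statement's English description precedes it below -/
import Mathlib

section
/- Assume additionally α ≠ 0 and p ≠ n/2. Then L_1 M = M L_1, where L_1 is the symmetric 2(N+1)×2(N+1) real matrix whose only nonzero entries (1-based indexing, together with the symmetric positions) are, for k = 1, …, N+1: (L_1)_{2k,2k} = (n-p+k-1)(p+k)/((p+1)(n-p)); (L_1)_{2k-1,2k} = -(n-p+N+1)(p+N+1)/(α(p+1)(n-2p)) · √( p(p+k)(n-p+k-1) / ((n-p+k)(p+k-1)(n-p)) ); and for k = 1, …, N: (L_1)_{2k,2k+2} = (N-k+1)(N+n+k+1)/(α(p+1)(n-p)) · √( k(n-p+k-1)(p+1+k)(n+k) / ((n+2k-1)(n+2k+1)(p+k)(n-p+k)) ). -/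
open Matrix

/-- Pochhammer symbol `(a)_k = a (a+1) ⋯ (a+k-1)`. -/
noncomputable def poch (a : ℝ) (k : ℕ) : ℝ := ∏ i ∈ Finset.range k, (a + i)

/-- Gegenbauer polynomial `C_w^λ(x)`, with the convention `C_w^λ = 0` for `w < 0`. -/
noncomputable def geg (l : ℝ) (w : ℤ) (x : ℝ) : ℝ :=
  if w < 0 then 0 else
    poch (2 * l) w.toNat / (w.toNat.factorial : ℝ) *
      ∑ k ∈ Finset.range (w.toNat + 1),
        (poch (-(w.toNat : ℝ)) k * poch ((w.toNat : ℝ) + 2 * l) k) /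
            (poch (l + 1 / 2) k * (k.factorial : ℝ)) * ((1 - x) / 2) ^ k

/-- The weight matrix `W_{p,n}(x)`. -/
noncomputable def Wmat (n : ℕ) (p : ℝ) (x : ℝ) : Matrix (Fin 2) (Fin 2) ℝ :=
  (1 - x ^ 2) ^ ((n : ℝ) / 2 - 1) •
    !![p * x ^ 2 + (n : ℝ) - p, -(n : ℝ) * x; -(n : ℝ) * x, ((n : ℝ) - p) * x ^ 2 + p]

/-- The matrix valued polynomial `P_w`. -/
noncomputable def Pmat (n : ℕ) (p : ℝ) (w : ℕ) (x : ℝ) : Matrix (Fin 2) (Fin 2) ℝ :=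
  !![1 / ((n : ℝ) + 1) * geg (((n : ℝ) + 1) / 2) (w : ℤ) x +
        1 / (p + w) * geg (((n : ℝ) + 3) / 2) ((w : ℤ) - 2) x,
      1 / (p + w) * geg (((n : ℝ) + 3) / 2) ((w : ℤ) - 1) x;
      1 / ((n : ℝ) - p + w) * geg (((n : ℝ) + 3) / 2) ((w : ℤ) - 1) x,
      1 / ((n : ℝ) + 1) * geg (((n : ℝ) + 1) / 2) (w : ℤ) x +
        1 / ((n : ℝ) - p + w) * geg (((n : ℝ) + 3) / 2) ((w : ℤ) - 2) x]

/-- The normalizing matrix `S_w`: the (diagonal, positive definite) inverse square root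
of `‖P_w‖² = ∫_{-1}^1 P_w W_{p,n} P_w^T dx`, given explicitly. -/
noncomputable def Smat (n : ℕ) (p : ℝ) (w : ℕ) : Matrix (Fin 2) (Fin 2) ℝ :=
  Real.sqrt (((w.factorial : ℝ) * ((n : ℝ) + 1) * ((n : ℝ) + 2 * w + 1) *
        Real.Gamma ((n : ℝ) / 2 + 3 / 2)) /
      (Real.sqrt Real.pi * 2 ^ (w / 2) * Real.Gamma ((n : ℝ) / 2 + 1 + (w / 2 : ℕ)) *
        ∏ k ∈ Finset.range ((w + 1) / 2), ((n : ℝ) + 2 * k + 1))) •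
    Matrix.diagonal ![Real.sqrt ((p + w) / (p * ((n : ℝ) - p + w + 1))),
      Real.sqrt (((n : ℝ) - p + w) / (((n : ℝ) - p) * (p + w + 1)))]

/-- The orthonormal matrix valued polynomials `Q_w = S_w P_w`. -/
noncomputable def Qmat (n : ℕ) (p : ℝ) (w : ℕ) (x : ℝ) : Matrix (Fin 2) (Fin 2) ℝ :=
  Smat n p w * Pmat n p w x

/-- The `2 × 2` block `M^{i,j} = ∫_{-1}^α Q_i(x) W_{p,n}(x) Q_j(x)^T dx`. -/
noncomputable def Mblk (n : ℕ) (p α : ℝ) (i j : ℕ) : Matrix (Fin 2) (Fin 2) ℝ :=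
  Matrix.of fun a b : Fin 2 =>
    ∫ x in (-1 : ℝ)..α, (Qmat n p i x * Wmat n p x * (Qmat n p j x)ᵀ) a b

/-- The full `2(N+1) × 2(N+1)` matrix `M`, with (1-based) entries
`M_{2i+1,2j+1} = M^{i,j}_{11}`, `M_{2i+1,2j+2} = M^{i,j}_{12}`,
`M_{2i+2,2j+1} = M^{i,j}_{21}`, `M_{2i+2,2j+2} = M^{i,j}_{22}`. -/
noncomputable def Mfull (n : ℕ) (p α : ℝ) (N : ℕ) :
    Matrix (Fin (2 * (N + 1))) (Fin (2 * (N + 1))) ℝ :=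
  Matrix.of fun r c =>
    Mblk n p α (r.val / 2) (c.val / 2) ⟨r.val % 2, by omega⟩ ⟨c.val % 2, by omega⟩

/-- The even diagonal entries `(L_1)_{2k,2k}`. -/
noncomputable def L1d (n : ℕ) (p : ℝ) (k : ℕ) : ℝ :=
  ((n : ℝ) - p + k - 1) * (p + k) / ((p + 1) * ((n : ℝ) - p))

/-- The entries `(L_1)_{2k-1,2k}`. -/
noncomputable def L1b (n : ℕ) (p α : ℝ) (N : ℕ) (k : ℕ) : ℝ :=
  -(((n : ℝ) - p + N + 1) * (p + N + 1)) / (α * (p + 1) * ((n : ℝ) - 2 * p)) *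
    Real.sqrt (p * (p + k) * ((n : ℝ) - p + k - 1) /
      (((n : ℝ) - p + k) * (p + k - 1) * ((n : ℝ) - p)))

/-- The entries `(L_1)_{2k,2k+2}`. -/
noncomputable def L1c (n : ℕ) (p α : ℝ) (N : ℕ) (k : ℕ) : ℝ :=
  ((N : ℝ) - k + 1) * ((N : ℝ) + n + k + 1) / (α * (p + 1) * ((n : ℝ) - p)) *
    Real.sqrt ((k : ℝ) * ((n : ℝ) - p + k - 1) * (p + 1 + k) * ((n : ℝ) + k) /
      (((n : ℝ) + 2 * k - 1) * ((n : ℝ) + 2 * k + 1) * (p + k) * ((n : ℝ) - p + k)))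

/-- The symmetric matrix `L_1`: in 1-based indexing its only nonzero entries (up to
symmetry) are `(L_1)_{2k,2k}`, `(L_1)_{2k-1,2k}` for `k = 1, …, N+1`, and
`(L_1)_{2k,2k+2}` for `k = 1, …, N`. -/
noncomputable def L1 (n : ℕ) (p α : ℝ) (N : ℕ) :
    Matrix (Fin (2 * (N + 1))) (Fin (2 * (N + 1))) ℝ :=
  Matrix.of fun i j =>
    let r := i.val + 1
    let s := j.val + 1
    if r = s ∧ r % 2 = 0 then L1d n p (r / 2)
    else if s = r + 1 ∧ r % 2 = 1 then L1b n p α N (s / 2)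
    else if r = s + 1 ∧ s % 2 = 1 then L1b n p α N (r / 2)
    else if s = r + 2 ∧ r % 2 = 0 then L1c n p α N (r / 2)
    else if r = s + 2 ∧ s % 2 = 0 then L1c n p α N (s / 2)
    else 0

/-!
As `L₁` and `M` are symmetric, they commute as soon as `L₁ M` is symmetric. Write `q = n - p`, and
let `J(y, z) = ∫_{-1}^α y W_{p,n} zᵀ` on rows of polynomials, so that `M` is the Gram matrix for `J`
of the rows of `Q_0, …, Q_N`. Up to scalars, the rows of `Q_w` are `U f = (p f + x f', f')` and
`V f = (f', q f + x f')`, where `f` is the Gegenbauer polynomial `C_w^{(n+1)/2}`. On these rows `L₁`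
acts as an operator: it sends `U f` to a multiple of `V f`, and `V f` to the sum of
`V ((α - x) D f)` and a combination of `x V f` and `U f`, where `D` is a second order operator
having the Gegenbauer polynomials as eigenvectors.

In `J(V f, U g)` the integrand is the derivative of `p q (1 - x²) ^ (n / 2) f g`. Hence this pairing
depends only on `(f g)(α)`: it is symmetric in `f` and `g`, and it vanishes when `f` has the factor
`α - x`. The same factor kills the boundary term of `J(V f, V g)`, so that `J(V ((α - x) D f), V g)`
is the integral of `q (α - x) (1 - x²) ^ (n / 2) (D f) (D g)`, which is symmetric as well. Pairing
`L₁ (V f)` with `U g` uses the relation `q J(U f, U g) = p J(V f, V g) + (q - p) J(x V f, U g)`.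
-/

theorem commute_gram_of_isSymm {ι R E : Type*} [Fintype ι] [CommSemiring R] [AddCommMonoid E]
    [Module R E] {J : LinearMap.BilinForm R E} (hJ : J.IsSymm) {L : Matrix ι ι R} (hL : L.IsSymm)
    {y : ι → E} (h : ∀ r c, J (∑ s, L r s • y s) (y c) = J (∑ s, L c s • y s) (y r)) :
    Commute L (of fun r c => J (y r) (y c)) := by
  ext r c
  have hrc := h r c
  simp only [map_sum, map_smul, LinearMap.sum_apply, LinearMap.smul_apply, smul_eq_mul] at hrc
  simp only [Matrix.mul_apply, of_apply, hrc]
  refine Finset.sum_congr rfl fun s _ => ?_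
  rw [hL.apply, hJ.eq, mul_comm]

section Gegenbauer

open Polynomial

variable {l : ℝ}

lemma coeff_X_mul_derivative {R : Type*} [CommSemiring R] (f : R[X]) (k : ℕ) :
    (X * derivative f).coeff k = k * f.coeff k := by
  cases k <;> simp [coeff_derivative, mul_comm]

lemma poch_eq_ascPochhammer_eval (a : ℝ) (k : ℕ) : poch a k = (ascPochhammer ℝ k).eval a := by
  induction k with
  | zero => simp [poch]
  | succ k ih => rw [ascPochhammer_succ_eval, ← ih, poch, Finset.prod_range_succ, poch]

lemma poch_succ (a : ℝ) (k : ℕ) : poch a (k + 1) = poch a k * (a + k) := by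
  simp only [poch_eq_ascPochhammer_eval, ascPochhammer_succ_eval]

lemma poch_succ_left (a : ℝ) (k : ℕ) : poch a (k + 1) = a * poch (a + 1) k := by
  simp [poch_eq_ascPochhammer_eval, ascPochhammer_succ_left]

lemma poch_pos {a : ℝ} (ha : 0 < a) (k : ℕ) : 0 < poch a k :=
  Finset.prod_pos fun _ _ => by positivity

lemma poch_neg_natCast_of_lt {w k : ℕ} (h : w < k) : poch (-(w : ℝ)) k = 0 := by
  rw [poch_eq_ascPochhammer_eval, ascPochhammer_eval_neg_coe_nat_of_lt h]

/-- The coefficient of `((1 - x) / 2) ^ k` in the Gegenbauer polynomial `C_w^l(x)`. -/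
noncomputable def gegenbauerCoeff (l : ℝ) (w k : ℕ) : ℝ :=
  poch (2 * l) w / w.factorial *
    (poch (-w) k * poch (w + 2 * l) k / (poch (l + 1 / 2) k * k.factorial))

lemma gegenbauerCoeff_succ_right (hl : -(1 / 2) < l) (w k : ℕ) :
    gegenbauerCoeff l w (k + 1) * ((k + 1) * (l + 1 / 2 + k)) =
      gegenbauerCoeff l w k * ((k - w) * (w + 2 * l + k)) := by
  have hl' : 0 < l + 1 / 2 := by linarith
  have := poch_pos hl' k
  simp only [gegenbauerCoeff, poch_succ, Nat.factorial_succ]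
  generalize l + 1 / 2 = m at *
  push_cast
  field_simp
  ring

lemma gegenbauerCoeff_succ_left (l : ℝ) (w k : ℕ) :
    gegenbauerCoeff l (w + 1) k * (w + 1 - k) = gegenbauerCoeff l w k * (w + 2 * l + k) := by
  have h₁ : (w + 2 * l) * poch ((w + 1 : ℕ) + 2 * l) k = poch (w + 2 * l) k * (w + 2 * l + k) := by
    rw [← poch_succ, poch_succ_left]
    push_cast
    ring_nf
  have h₂ : poch (-(w + 1 : ℕ)) k * (-(w + 1) + k) = -(w + 1) * poch (-w) k := by
    have := (poch_succ (-(w + 1)) k).symm.trans (poch_succ_left (-(w + 1)) k)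
    push_cast
    ring_nf at this ⊢
    exact this
  push_cast at h₁ h₂
  simp only [gegenbauerCoeff, poch_succ (2 * l), Nat.factorial_succ]
  generalize poch (l + 1 / 2) k = c
  obtain rfl | hc := eq_or_ne c 0
  · simp
  push_cast
  field_simp
  linear_combination (-poch (2 * l) w * poch (w + 1 + 2 * l) k * (2 * l + w)) * h₂ +
    (w + 1) * poch (2 * l) w * poch (-w) k * h₁

lemma gegenbauerCoeff_succ_succ (hl : -(1 / 2) < l) (w k : ℕ) :
    gegenbauerCoeff l (w + 1) (k + 1) * (k + 1) = -4 * l * gegenbauerCoeff (l + 1) w k := by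
  have : 0 < l + 1 / 2 := by linarith
  have := poch_pos (show 0 < l + 1 / 2 + 1 by linarith) k
  have h₁ : (2 * l + 1) * poch (2 * (l + 1)) w = poch (2 * l + 1) w * (2 * l + 1 + w) := by
    rw [← poch_succ, poch_succ_left]
    ring_nf
  simp only [gegenbauerCoeff, poch_succ_left, Nat.factorial_succ]
  rw [show -((w + 1 : ℕ) : ℝ) + 1 = -w by push_cast; ring,
    show ((w + 1 : ℕ) : ℝ) + 2 * l + 1 = w + 2 * (l + 1) by push_cast; ring,
    show l + 1 + 1 / 2 = l + 1 / 2 + 1 by ring]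
  generalize poch (l + 1 / 2 + 1) k = c at *
  have h₂ : 2 * l + 1 ≠ 0 := by linarith
  push_cast
  field_simp
  linear_combination 4 * l * poch (-w) k * poch (w + 2 * (l + 1)) k * h₁

lemma gegenbauerCoeff_succ_sub (hl : -(1 / 2) < l) (w k : ℕ) :
    (gegenbauerCoeff l (w + 1) (k + 1) - gegenbauerCoeff l w (k + 1)) * (k + 1) =
      -2 * (w + 2 * l + k) * gegenbauerCoeff l w k := by
  have h : l + 1 / 2 + k ≠ 0 := by positivity [show 0 < l + 1 / 2 by linarith]
  refine mul_right_cancel₀ h ?_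
  have h₁ := gegenbauerCoeff_succ_right hl (w + 1) k
  push_cast at h₁
  linear_combination h₁ - gegenbauerCoeff_succ_right hl w k -
    (w + 1 + 2 * l + k) * gegenbauerCoeff_succ_left l w k

/-- The polynomial `A` with `C_w^l(x) = A((1 - x) / 2)`. -/
noncomputable def shiftedGegenbauerPoly (l : ℝ) (w : ℕ) : ℝ[X] :=
  ∑ k ∈ Finset.range (w + 1), monomial k (gegenbauerCoeff l w k)

/-- The Gegenbauer polynomial `C_w^l`. -/
noncomputable def gegenbauerPoly (l : ℝ) (w : ℕ) : ℝ[X] :=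
  (shiftedGegenbauerPoly l w).comp (C 2⁻¹ * (1 - X))

lemma coeff_shiftedGegenbauerPoly (l : ℝ) (w k : ℕ) :
    (shiftedGegenbauerPoly l w).coeff k = gegenbauerCoeff l w k := by
  simp only [shiftedGegenbauerPoly, finsetSum_coeff, coeff_monomial, Finset.sum_ite_eq',
    Finset.mem_range, ite_eq_left_iff, not_lt]
  intro h
  simp [gegenbauerCoeff, poch_neg_natCast_of_lt (Nat.lt_of_succ_le h)]

lemma geg_natCast (l : ℝ) (w : ℕ) (x : ℝ) : geg l w x = (gegenbauerPoly l w).eval x := by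
  simp only [geg, Int.toNat_natCast, gegenbauerPoly, shiftedGegenbauerPoly, gegenbauerCoeff,
    eval_comp, eval_finsetSum, eval_monomial, eval_mul, eval_C, eval_sub, eval_one, eval_X,
    Finset.mul_sum]
  rw [if_neg (by omega)]
  refine Finset.sum_congr rfl fun k _ => ?_
  rw [inv_mul_eq_div, mul_assoc]

lemma gegenbauerPoly_zero (l : ℝ) : gegenbauerPoly l 0 = 1 := by
  simp [gegenbauerPoly, shiftedGegenbauerPoly, gegenbauerCoeff, poch]

lemma derivative_gegenbauerPoly (l : ℝ) (w : ℕ) :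
    derivative (gegenbauerPoly l w) =
      C (-2⁻¹) * (derivative (shiftedGegenbauerPoly l w)).comp (C 2⁻¹ * (1 - X)) := by
  rw [gegenbauerPoly, derivative_comp]
  congr 1
  simp

lemma derivative_shiftedGegenbauerPoly_succ_sub (hl : -(1 / 2) < l) (w : ℕ) :
    derivative (shiftedGegenbauerPoly l (w + 1)) - derivative (shiftedGegenbauerPoly l w) =
      -2 * (C (w + 2 * l) * shiftedGegenbauerPoly l w +
        X * derivative (shiftedGegenbauerPoly l w)) := by
  ext k
  rw [← C_ofNat, ← C_neg]
  simp only [coeff_sub, coeff_add, coeff_C_mul, coeff_derivative, coeff_X_mul_derivative,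
    coeff_shiftedGegenbauerPoly]
  linear_combination gegenbauerCoeff_succ_sub hl w k

lemma mul_shiftedGegenbauerPoly_succ (l : ℝ) (w : ℕ) :
    C (w + 1 : ℝ) * shiftedGegenbauerPoly l (w + 1) -
        X * derivative (shiftedGegenbauerPoly l (w + 1)) =
      C (w + 2 * l) * shiftedGegenbauerPoly l w + X * derivative (shiftedGegenbauerPoly l w) := by
  ext k
  simp only [coeff_sub, coeff_add, coeff_C_mul, coeff_X_mul_derivative,
    coeff_shiftedGegenbauerPoly]
  linear_combination gegenbauerCoeff_succ_left l w k

theorem derivative_gegenbauerPoly_succ (hl : -(1 / 2) < l) (w : ℕ) :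
    derivative (gegenbauerPoly l (w + 1)) =
      X * derivative (gegenbauerPoly l w) + C (w + 2 * l) * gegenbauerPoly l w := by
  have h := congr_arg (comp · (C (2⁻¹ : ℝ) * (1 - X)))
    (derivative_shiftedGegenbauerPoly_succ_sub hl w)
  have hC : C (2⁻¹ : ℝ) * 2 = 1 := by rw [← C_ofNat, ← C_mul]; simp
  simp only [sub_comp, mul_comp, add_comp, neg_comp, C_comp, X_comp, ofNat_comp] at h
  rw [derivative_gegenbauerPoly, derivative_gegenbauerPoly, gegenbauerPoly, C_neg]
  linear_combination (-C (2⁻¹ : ℝ)) * h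
    + (C (w + 2 * l) * (shiftedGegenbauerPoly l w).comp (C 2⁻¹ * (1 - X)) +
      C 2⁻¹ * (1 - X) * (derivative (shiftedGegenbauerPoly l w)).comp (C 2⁻¹ * (1 - X))) * hC

theorem X_mul_derivative_gegenbauerPoly_succ (hl : -(1 / 2) < l) (w : ℕ) :
    X * derivative (gegenbauerPoly l (w + 1)) =
      derivative (gegenbauerPoly l w) + C (w + 1 : ℝ) * gegenbauerPoly l (w + 1) := by
  have h₁ := derivative_gegenbauerPoly_succ hl w
  have h₂ := congr_arg (comp · (C (2⁻¹ : ℝ) * (1 - X))) (mul_shiftedGegenbauerPoly_succ l w)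
  simp only [sub_comp, mul_comp, add_comp, C_comp, X_comp] at h₂
  simp only [derivative_gegenbauerPoly, C_neg] at h₁ ⊢
  rw [gegenbauerPoly] at h₁ ⊢
  linear_combination h₁ - h₂

theorem derivative_gegenbauerPoly_succ_eq (hl : -(1 / 2) < l) (w : ℕ) :
    derivative (gegenbauerPoly l (w + 1)) = C (2 * l) * gegenbauerPoly (l + 1) w := by
  have h : derivative (shiftedGegenbauerPoly l (w + 1)) =
      C (-4 * l) * shiftedGegenbauerPoly (l + 1) w := by
    ext k
    simp only [coeff_C_mul, coeff_derivative, coeff_shiftedGegenbauerPoly]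
    exact gegenbauerCoeff_succ_succ hl w k
  rw [derivative_gegenbauerPoly, h, mul_comp, C_comp, ← mul_assoc, ← C_mul, gegenbauerPoly]
  ring_nf

theorem mul_gegenbauerPoly_succ (hl : -(1 / 2) < l) (w : ℕ) :
    C (w + 1 : ℝ) * gegenbauerPoly l (w + 1) =
      C (w + 2 * l) * X * gegenbauerPoly l w - (1 - X ^ 2) * derivative (gegenbauerPoly l w) := by
  linear_combination X * derivative_gegenbauerPoly_succ hl w -
    X_mul_derivative_gegenbauerPoly_succ hl w

theorem gegenbauerPoly_ode (hl : -(1 / 2) < l) (w : ℕ) :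
    (1 - X ^ 2) * derivative (derivative (gegenbauerPoly l w)) =
      C (2 * l + 1) * X * derivative (gegenbauerPoly l w) -
        C (w * (w + 2 * l)) * gegenbauerPoly l w := by
  have h := congr_arg derivative (mul_gegenbauerPoly_succ hl w)
  simp only [derivative_mul, derivative_sub, derivative_C, derivative_X, derivative_one,
    derivative_X_pow] at h
  have h' := derivative_gegenbauerPoly_succ hl w
  simp only [C_add, C_mul, map_natCast, map_one, Nat.cast_ofNat, map_ofNat] at h h' ⊢
  linear_combination h - (w + 1 : ℝ[X]) * h'

/-- The polynomial `(w + 2 l - 1) C_{w-1}^l`, in a form that also makes sense (and vanishes) at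
`w = 0`. -/
noncomputable def gegenbauerLower (l : ℝ) (w : ℕ) : ℝ[X] :=
  C (w : ℝ) * X * gegenbauerPoly l w + (1 - X ^ 2) * derivative (gegenbauerPoly l w)

lemma gegenbauerLower_zero (l : ℝ) : gegenbauerLower l 0 = 0 := by
  simp [gegenbauerLower, gegenbauerPoly_zero]

lemma gegenbauerLower_succ (hl : -(1 / 2) < l) (w : ℕ) :
    gegenbauerLower l (w + 1) = C (w + 2 * l) * gegenbauerPoly l w := by
  have h := derivative_gegenbauerPoly_succ hl w
  rw [gegenbauerLower, Nat.cast_succ]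
  linear_combination h - X * X_mul_derivative_gegenbauerPoly_succ hl w

lemma derivative_gegenbauerLower (hl : -(1 / 2) < l) (w : ℕ) :
    derivative (gegenbauerLower l w) =
      C (w + 2 * l - 1) *
        (X * derivative (gegenbauerPoly l w) - C (w : ℝ) * gegenbauerPoly l w) := by
  have h := gegenbauerPoly_ode hl w
  simp only [gegenbauerLower, derivative_add, derivative_sub, derivative_mul, derivative_C,
    derivative_X, derivative_one, derivative_X_pow]
  simp only [C_add, C_sub, C_mul, map_natCast, map_one, Nat.cast_ofNat, map_ofNat] at h ⊢
  linear_combination h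

lemma gegenbauerPoly_three_term (hl : -(1 / 2) < l) (w : ℕ) :
    C (2 * (w + l)) * (X * gegenbauerPoly l w) =
      C (w + 1 : ℝ) * gegenbauerPoly l (w + 1) + gegenbauerLower l w := by
  rw [mul_gegenbauerPoly_succ hl, gegenbauerLower]
  simp only [C_add, C_mul, map_natCast, map_ofNat]
  ring

lemma geg_add_one_pred (hl : -(1 / 2) < l) (w : ℕ) (x : ℝ) :
    2 * l * geg (l + 1) (w - 1) x = (derivative (gegenbauerPoly l w)).eval x := by
  cases w with
  | zero => simp [geg, gegenbauerPoly_zero]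
  | succ w =>
    rw [derivative_gegenbauerPoly_succ_eq hl, eval_mul, eval_C, ← geg_natCast]
    push_cast
    rw [add_sub_cancel_right]

lemma geg_add_one_pred_pred (hl : -(1 / 2) < l) (w : ℕ) (x : ℝ) :
    2 * l * geg (l + 1) (w - 2) x =
      (X * derivative (gegenbauerPoly l w) - C (w : ℝ) * gegenbauerPoly l w).eval x := by
  cases w with
  | zero => simp [geg, gegenbauerPoly_zero]
  | succ w =>
    rw [Nat.cast_succ (R := ℝ), X_mul_derivative_gegenbauerPoly_succ hl, add_sub_cancel_right,
      ← geg_add_one_pred hl]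
    push_cast
    ring_nf

end Gegenbauer

section TruncatedForm

open Polynomial MeasureTheory

variable {p q α μ : ℝ}

lemma intervalIntegrable_one_sub_sq_rpow_mul (hμ : 0 < μ) (hα : α ∈ Set.Ioo (-1 : ℝ) 1)
    {g : ℝ → ℝ} (hg : Continuous g) :
    IntervalIntegrable (fun x => (1 - x ^ 2) ^ (μ - 1) * g x) volume (-1) α := by
  have h₁ : IntervalIntegrable (fun x : ℝ => (1 + x) ^ (μ - 1)) volume (-1) α := by
    simpa using (intervalIntegral.intervalIntegrable_rpow' (a := 0) (b := 1 + α)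
      (r := μ - 1) (by linarith)).comp_add_left 1
  have h₂ : ContinuousOn (fun x : ℝ => (1 - x) ^ (μ - 1) * g x) (Set.uIcc (-1) α) := by
    rw [Set.uIcc_of_le hα.1.le]
    refine (ContinuousOn.rpow_const (by fun_prop) fun x hx => ?_).mul hg.continuousOn
    exact Or.inl (by linarith [hx.2, hα.2])
  refine (h₁.mul_continuousOn h₂).congr fun x hx => ?_
  rw [Set.uIoc_of_le hα.1.le] at hx
  rw [← mul_assoc, ← Real.mul_rpow (by linarith [hx.1]) (by linarith [hx.2, hα.2])]
  ring_nf

/-- Integration over `[-1, α]` against the scalar weight `(1 - x ^ 2) ^ (μ - 1)`. -/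
noncomputable def weightIntegral (hμ : 0 < μ) (hα : α ∈ Set.Ioo (-1 : ℝ) 1) : ℝ[X] →ₗ[ℝ] ℝ where
  toFun f := ∫ x in (-1)..α, (1 - x ^ 2) ^ (μ - 1) * f.eval x
  map_add' f g := by
    simp only [eval_add, mul_add]
    exact intervalIntegral.integral_add (intervalIntegrable_one_sub_sq_rpow_mul hμ hα f.continuous)
      (intervalIntegrable_one_sub_sq_rpow_mul hμ hα g.continuous)
  map_smul' c f := by
    simp only [eval_smul, smul_eq_mul, RingHom.id_apply, mul_left_comm _ c,
      intervalIntegral.integral_const_mul]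

lemma weightIntegral_apply (hμ : 0 < μ) (hα : α ∈ Set.Ioo (-1 : ℝ) 1) (f : ℝ[X]) :
    weightIntegral hμ hα f = ∫ x in (-1)..α, (1 - x ^ 2) ^ (μ - 1) * f.eval x := rfl

/-- The operator `f ↦ (1 - x²) f' - m x f`; multiplied by `(1 - x²) ^ (m / 2 - 1)` the result is
the derivative of `(1 - x²) ^ (m / 2) f`. -/
noncomputable def weightedDerivative (m : ℝ) (f : ℝ[X]) : ℝ[X] :=
  (1 - X ^ 2) * derivative f - C m * X * f

theorem weightIntegral_weightedDerivative (hμ : 0 < μ) (hα : α ∈ Set.Ioo (-1 : ℝ) 1) (f : ℝ[X]) :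
    weightIntegral hμ hα (weightedDerivative (2 * μ) f) = (1 - α ^ 2) ^ μ * f.eval α := by
  have hderiv : ∀ x ∈ Set.Ioo (-1) α, HasDerivAt (fun x => (1 - x ^ 2) ^ μ * f.eval x)
      ((1 - x ^ 2) ^ (μ - 1) * (weightedDerivative (2 * μ) f).eval x) x := by
    intro x hx
    have hx' : 0 < 1 - x ^ 2 := by nlinarith [hx.1, hx.2, hα.2]
    have hsq : HasDerivAt (fun x : ℝ => 1 - x ^ 2) (-(2 * x)) x :=
      ((hasDerivAt_pow 2 x).const_sub 1).congr_deriv (by norm_num)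
    refine ((hsq.rpow_const (p := μ) (Or.inl hx'.ne')).mul (f.hasDerivAt x)).congr_deriv ?_
    rw [show (1 - x ^ 2) ^ μ = (1 - x ^ 2) ^ (μ - 1) * (1 - x ^ 2) by
      rw [← Real.rpow_add_one hx'.ne', sub_add_cancel]]
    simp only [weightedDerivative, eval_sub, eval_mul, eval_pow, eval_C, eval_X, eval_one]
    ring
  have hcont : Continuous fun x : ℝ => (1 - x ^ 2) ^ μ * f.eval x :=
    ((continuous_const.sub (continuous_pow 2)).rpow_const fun _ => Or.inr hμ.le).mul f.continuous
  rw [weightIntegral_apply, intervalIntegral.integral_eq_sub_of_hasDerivAt_of_le hα.1.le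
    hcont.continuousOn hderiv
    (intervalIntegrable_one_sub_sq_rpow_mul hμ hα (Polynomial.continuous _))]
  simp [Real.zero_rpow hμ.ne']

/-- The polynomial part of `W_{p,n}`, for `n = p + q`. -/
noncomputable def matrixWeight (p q : ℝ) : Matrix (Fin 2) (Fin 2) ℝ[X] :=
  !![C p * X ^ 2 + C q, -C (p + q) * X; -C (p + q) * X, C q * X ^ 2 + C p]

lemma matrixWeight_transpose (p q : ℝ) : (matrixWeight p q)ᵀ = matrixWeight p q := by
  ext i j
  fin_cases i <;> fin_cases j <;> rfl

lemma dotProduct_matrixWeight_comm (p q : ℝ) (y z : Fin 2 → ℝ[X]) :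
    y ⬝ᵥ matrixWeight p q *ᵥ z = z ⬝ᵥ matrixWeight p q *ᵥ y := by
  rw [dotProduct_mulVec, dotProduct_comm, ← mulVec_transpose, matrixWeight_transpose]

/-- The bilinear form `∫_{-1}^α y W_{p,n} zᵀ`, for `n = p + q`, on rows of polynomials. -/
noncomputable def truncatedForm (hp : 0 < p) (hq : 0 < q) (hα : α ∈ Set.Ioo (-1 : ℝ) 1) :
    LinearMap.BilinForm ℝ (Fin 2 → ℝ[X]) :=
  LinearMap.mk₂ ℝ
    (fun y z => weightIntegral (half_pos (add_pos hp hq)) hα (y ⬝ᵥ matrixWeight p q *ᵥ z))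
    (fun _ _ _ => by simp only [add_dotProduct, map_add])
    (fun _ _ _ => by simp only [smul_dotProduct, map_smul])
    (fun _ _ _ => by simp only [mulVec_add, dotProduct_add, map_add])
    (fun _ _ _ => by simp only [mulVec_smul, dotProduct_smul, map_smul])

/-- The row `(p f + x f', f')`, a multiple of the first row of `P_w` when `f` is a Gegenbauer
polynomial. -/
noncomputable def firstRow (p : ℝ) : ℝ[X] →ₗ[ℝ] Fin 2 → ℝ[X] where
  toFun f := ![C p * f + X * derivative f, derivative f]
  map_add' f g := by
    ext1 i
    fin_cases i <;> simp [mul_add, add_add_add_comm]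
  map_smul' c f := by
    ext1 i
    fin_cases i <;> simp

/-- The row `(f', q f + x f')`, a multiple of the second row of `P_w` when `f` is a Gegenbauer
polynomial. -/
noncomputable def secondRow (q : ℝ) : ℝ[X] →ₗ[ℝ] Fin 2 → ℝ[X] where
  toFun f := ![derivative f, C q * f + X * derivative f]
  map_add' f g := by
    ext1 i
    fin_cases i <;> simp [mul_add, add_add_add_comm]
  map_smul' c f := by
    ext1 i
    fin_cases i <;> simp

lemma firstRow_apply (p : ℝ) (f : ℝ[X]) :
    firstRow p f = ![C p * f + X * derivative f, derivative f] := rfl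

lemma secondRow_apply (q : ℝ) (f : ℝ[X]) :
    secondRow q f = ![derivative f, C q * f + X * derivative f] := rfl

lemma secondRow_dotProduct_firstRow (p q : ℝ) (f g : ℝ[X]) :
    secondRow q f ⬝ᵥ matrixWeight p q *ᵥ firstRow p g =
      C (p * q) * weightedDerivative (p + q) (f * g) := by
  simp only [secondRow_apply, firstRow_apply, matrixWeight, weightedDerivative, mulVec, dotProduct,
    Fin.sum_univ_two, of_apply, cons_val_zero, cons_val_one, derivative_mul, C_add, C_mul]
  ring

/-- The second order operator having the Gegenbauer polynomials `C_w^{(p+q+1)/2}` as eigenvectors,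
with eigenvalue `(q + w) (p + w + 1)`. -/
noncomputable def gegenbauerOperator (p q : ℝ) (f : ℝ[X]) : ℝ[X] :=
  C (q * (p + 1)) * f + C (p + q + 2) * X * derivative f -
    (1 - X ^ 2) * derivative (derivative f)

lemma secondRow_dotProduct_secondRow (p q : ℝ) (f g : ℝ[X]) :
    secondRow q f ⬝ᵥ matrixWeight p q *ᵥ secondRow q g =
      C q * (weightedDerivative (p + q) (f * weightedDerivative q g) +
        (1 - X ^ 2) * (f * gegenbauerOperator p q g)) := by
  simp only [secondRow_apply, matrixWeight, weightedDerivative, gegenbauerOperator, mulVec,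
    dotProduct, Fin.sum_univ_two, of_apply, cons_val_zero, cons_val_one, derivative_mul,
    derivative_sub, derivative_C, derivative_X, derivative_one, derivative_X_pow, C_add, C_mul,
    C_1, map_ofNat, Nat.cast_ofNat]
  ring

lemma firstRow_dotProduct_firstRow (p q : ℝ) (f g : ℝ[X]) :
    C q * (firstRow p f ⬝ᵥ matrixWeight p q *ᵥ firstRow p g) =
      C p * (secondRow q f ⬝ᵥ matrixWeight p q *ᵥ secondRow q g) +
        C (q - p) * (X * (secondRow q f ⬝ᵥ matrixWeight p q *ᵥ firstRow p g)) := by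
  simp only [secondRow_apply, firstRow_apply, matrixWeight, mulVec, dotProduct,
    Fin.sum_univ_two, of_apply, cons_val_zero, cons_val_one, C_add, C_sub]
  ring

variable {hp : 0 < p} {hq : 0 < q} {hα : α ∈ Set.Ioo (-1 : ℝ) 1}

lemma truncatedForm_apply (y z : Fin 2 → ℝ[X]) :
    truncatedForm hp hq hα y z =
      weightIntegral (half_pos (add_pos hp hq)) hα (y ⬝ᵥ matrixWeight p q *ᵥ z) := rfl

lemma truncatedForm_comm (y z : Fin 2 → ℝ[X]) :
    truncatedForm hp hq hα y z = truncatedForm hp hq hα z y := by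
  rw [truncatedForm_apply, dotProduct_matrixWeight_comm, truncatedForm_apply]

lemma truncatedForm_isSymm : (truncatedForm hp hq hα).IsSymm :=
  ⟨truncatedForm_comm⟩

lemma truncatedForm_X_smul_left (y z : Fin 2 → ℝ[X]) :
    truncatedForm hp hq hα ((X : ℝ[X]) • y) z =
      weightIntegral (half_pos (add_pos hp hq)) hα (X * (y ⬝ᵥ matrixWeight p q *ᵥ z)) := by
  rw [truncatedForm_apply, smul_dotProduct, smul_eq_mul]

lemma truncatedForm_X_smul_comm (y z : Fin 2 → ℝ[X]) :
    truncatedForm hp hq hα ((X : ℝ[X]) • y) z = truncatedForm hp hq hα ((X : ℝ[X]) • z) y := by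
  simp only [truncatedForm_X_smul_left, dotProduct_matrixWeight_comm p q y]

theorem truncatedForm_secondRow_firstRow (f g : ℝ[X]) :
    truncatedForm hp hq hα (secondRow q f) (firstRow p g) =
      p * q * ((1 - α ^ 2) ^ ((p + q) / 2) * (f * g).eval α) := by
  rw [truncatedForm_apply, secondRow_dotProduct_firstRow, ← smul_eq_C_mul, map_smul, smul_eq_mul,
    ← weightIntegral_weightedDerivative (half_pos (add_pos hp hq)) hα, mul_div_cancel₀]
  exact two_ne_zero

lemma truncatedForm_secondRow_firstRow_comm (f g : ℝ[X]) :
    truncatedForm hp hq hα (secondRow q f) (firstRow p g) =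
      truncatedForm hp hq hα (secondRow q g) (firstRow p f) := by
  rw [truncatedForm_secondRow_firstRow, truncatedForm_secondRow_firstRow, mul_comm f]

theorem truncatedForm_secondRow_secondRow {f : ℝ[X]} (hf : f.eval α = 0) (g : ℝ[X]) :
    truncatedForm hp hq hα (secondRow q f) (secondRow q g) =
      q * weightIntegral (half_pos (add_pos hp hq)) hα
        ((1 - X ^ 2) * (f * gegenbauerOperator p q g)) := by
  have hboundary : weightIntegral (half_pos (add_pos hp hq)) hα
      (weightedDerivative (p + q) (f * weightedDerivative q g)) = 0 := by
    have h := weightIntegral_weightedDerivative (half_pos (add_pos hp hq)) hα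
      (f * weightedDerivative q g)
    rwa [mul_div_cancel₀ _ two_ne_zero, eval_mul, hf, zero_mul, mul_zero] at h
  rw [truncatedForm_apply, secondRow_dotProduct_secondRow, ← smul_eq_C_mul, map_smul, map_add,
    hboundary, zero_add, smul_eq_mul]

theorem truncatedForm_firstRow_firstRow (f g : ℝ[X]) :
    q * truncatedForm hp hq hα (firstRow p f) (firstRow p g) =
      p * truncatedForm hp hq hα (secondRow q f) (secondRow q g) +
        (q - p) * truncatedForm hp hq hα ((X : ℝ[X]) • secondRow q f) (firstRow p g) := by
  rw [truncatedForm_X_smul_left]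
  simp only [truncatedForm_apply, ← smul_eq_mul (a := q),
    ← smul_eq_mul (a := p), ← smul_eq_mul (a := q - p), ← map_smul, ← map_add]
  simp only [smul_eq_C_mul, firstRow_dotProduct_firstRow]

/-- The row operator by which `α (p + 1) q L₁` acts on the rows `secondRow q (C_w)`, for
`κ = (q + N + 1) (p + N + 1) / (q - p)`. -/
noncomputable def commutingRow (p q α κ : ℝ) (f : ℝ[X]) : Fin 2 → ℝ[X] :=
  secondRow q ((C α - X) * gegenbauerOperator p q f) +
    κ • ((q - p) • (X : ℝ[X]) • secondRow q f - q • firstRow p f)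

theorem truncatedForm_commutingRow_firstRow (κ : ℝ) (f g : ℝ[X]) :
    truncatedForm hp hq hα (commutingRow p q α κ f) (firstRow p g) =
      -(p * κ) * truncatedForm hp hq hα (secondRow q f) (secondRow q g) := by
  have h := truncatedForm_firstRow_firstRow (hp := hp) (hq := hq) (hα := hα) f g
  have h₀ : truncatedForm hp hq hα (secondRow q ((C α - X) * gegenbauerOperator p q f))
      (firstRow p g) = 0 := by
    simp [truncatedForm_secondRow_firstRow]
  simp only [commutingRow, map_add, map_sub, map_smul, LinearMap.add_apply, LinearMap.sub_apply,
    LinearMap.smul_apply, smul_eq_mul, h₀]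
  linear_combination -κ * h

theorem truncatedForm_commutingRow_secondRow_comm (κ : ℝ) (f g : ℝ[X]) :
    truncatedForm hp hq hα (commutingRow p q α κ f) (secondRow q g) =
      truncatedForm hp hq hα (commutingRow p q α κ g) (secondRow q f) := by
  have hroot (h : ℝ[X]) : ((C α - X) * h).eval α = 0 := by simp
  simp only [commutingRow, map_add, map_sub, map_smul, LinearMap.add_apply, LinearMap.sub_apply,
    LinearMap.smul_apply, truncatedForm_secondRow_secondRow (hroot _),
    truncatedForm_X_smul_comm (secondRow q f), truncatedForm_comm (firstRow p f),
    truncatedForm_comm (firstRow p g), truncatedForm_secondRow_firstRow_comm g]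
  rw [mul_right_comm, mul_assoc]

end TruncatedForm

section GegenbauerRows

open Polynomial

variable {p q l : ℝ}

lemma gegenbauerOperator_gegenbauerPoly (hl : -(1 / 2) < l) (hpq : 2 * l = p + q + 1) (w : ℕ) :
    gegenbauerOperator p q (gegenbauerPoly l w) =
      C ((q + w) * (p + w + 1)) * gegenbauerPoly l w := by
  have h := gegenbauerPoly_ode hl w
  rw [hpq] at h
  rw [gegenbauerOperator, h]
  simp only [C_add, C_mul, C_1, map_ofNat]
  ring

lemma X_smul_secondRow (q : ℝ) (f : ℝ[X]) :
    (X : ℝ[X]) • secondRow q f = secondRow q (X * f) - ![f, X * f] := by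
  ext1 i
  fin_cases i
  · simp [secondRow_apply]
  · simp only [secondRow_apply, Fin.mk_one, cons_val_one, cons_val_fin_one, Pi.smul_apply,
      Pi.sub_apply, smul_eq_mul, derivative_mul, derivative_X]
    ring

lemma secondRow_X_mul_gegenbauerPoly (hl : -(1 / 2) < l) {w : ℕ} (hw : w + l ≠ 0) (q : ℝ) :
    secondRow q (X * gegenbauerPoly l w) =
      ((w + 1) / (2 * (w + l))) • secondRow q (gegenbauerPoly l (w + 1)) +
        (1 / (2 * (w + l))) • secondRow q (gegenbauerLower l w) := by
  have h : X * gegenbauerPoly l w = ((w + 1) / (2 * (w + l))) • gegenbauerPoly l (w + 1) +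
      (1 / (2 * (w + l))) • gegenbauerLower l w := by
    have h₃ := gegenbauerPoly_three_term hl w
    rw [← smul_eq_C_mul, ← smul_eq_C_mul] at h₃
    rw [← inv_smul_smul₀ (mul_ne_zero two_ne_zero hw) (X * _), h₃]
    module
  rw [h, map_add, map_smul, map_smul]

lemma gegenbauerPoly_row_eq (hp : 0 < p) (hq : 0 < q) (hpq : 2 * l = p + q + 1) (w : ℕ) :
    ![gegenbauerPoly l w, X * gegenbauerPoly l w] =
      (q / ((p + w) * (q + w + 1))) • firstRow p (gegenbauerPoly l w) +
        ((w + 1) / (2 * (w + l) * (q + w + 1))) • secondRow q (gegenbauerPoly l (w + 1)) -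
          (1 / (2 * (w + l) * (p + w))) • secondRow q (gegenbauerLower l w) := by
  have hl : -(1 / 2) < l := by linarith
  have hl₀ : 0 < l := by linarith
  obtain rfl : p = 2 * l - q - 1 := by linarith
  ext1 i
  refine Polynomial.funext fun x => ?_
  have h₁ := congr_arg (eval x) (mul_gegenbauerPoly_succ hl w)
  have h₂ := congr_arg (eval x) (derivative_gegenbauerPoly_succ hl w)
  have h₃ := congr_arg (eval x) (derivative_gegenbauerLower hl w)
  simp only [eval_mul, eval_add, eval_sub, eval_C, eval_X, eval_pow, eval_one] at h₁ h₂ h₃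
  fin_cases i <;>
    simp only [Fin.zero_eta, Fin.mk_one, cons_val_zero, cons_val_one, cons_val_fin_one,
      Pi.add_apply, Pi.sub_apply, Pi.smul_apply, secondRow_apply, firstRow_apply, eval_sub,
      eval_add, eval_smul, eval_mul, eval_C, eval_X, smul_eq_mul, h₂, h₃]
  · field_simp
    ring
  · rw [gegenbauerLower]
    simp only [eval_add, eval_sub, eval_mul, eval_C, eval_X, eval_pow, eval_one]
    field_simp
    linear_combination (-(q * (2 * l - q - 1 + w))) * h₁

theorem commutingRow_gegenbauerPoly (hp : 0 < p) (hq : 0 < q) (hpq : 2 * l = p + q + 1)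
    (α κ : ℝ) (w : ℕ) :
    commutingRow p q α κ (gegenbauerPoly l w) =
      (α * ((q + w) * (p + w + 1))) • secondRow q (gegenbauerPoly l w) -
        (κ * q * ((p + w + 1) * (q + w) / ((p + w) * (q + w + 1)))) •
          firstRow p (gegenbauerPoly l w) +
        ((κ * (q - p) - p * q - (w + 1) * (w + 1 + p + q)) *
          ((q + w) / ((p + q + 2 * w + 1) * (q + w + 1))) * (w + 1)) •
          secondRow q (gegenbauerPoly l (w + 1)) +
        ((κ * (q - p) - p * q - w * (w + p + q)) *
          ((p + w + 1) / ((p + q + 2 * w + 1) * (p + w)))) •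
          secondRow q (gegenbauerLower l w) := by
  have hl : -(1 / 2) < l := by linarith
  have hw : w + l ≠ 0 := by positivity [show 0 < l by linarith]
  have hm : 2 * (w + l) = p + q + 2 * w + 1 := by linarith
  rw [commutingRow, gegenbauerOperator_gegenbauerPoly hl hpq, sub_mul, mul_left_comm X,
    ← smul_eq_C_mul, ← smul_eq_C_mul, ← smul_eq_C_mul, map_sub, map_smul, map_smul, map_smul,
    X_smul_secondRow, gegenbauerPoly_row_eq hp hq hpq, secondRow_X_mul_gegenbauerPoly hl hw, hm]
  match_scalars <;> field_simp <;> ring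

end GegenbauerRows

section Normalization

variable {n : ℕ} {p q α κ : ℝ} {N : ℕ}

/-- The scalar factor of `S_w ^ 2`. -/
noncomputable def normConst (n w : ℕ) : ℝ :=
  ((w.factorial : ℝ) * ((n : ℝ) + 1) * ((n : ℝ) + 2 * w + 1) * Real.Gamma ((n : ℝ) / 2 + 3 / 2)) /
    (Real.sqrt Real.pi * 2 ^ (w / 2) * Real.Gamma ((n : ℝ) / 2 + 1 + (w / 2 : ℕ)) *
      ∏ k ∈ Finset.range ((w + 1) / 2), ((n : ℝ) + 2 * k + 1))

lemma normConst_pos (n w : ℕ) : 0 < normConst n w := by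
  have : 0 < Real.Gamma ((n : ℝ) / 2 + 3 / 2) := Real.Gamma_pos_of_pos (by positivity)
  have : 0 < Real.Gamma ((n : ℝ) / 2 + 1 + (w / 2 : ℕ)) := Real.Gamma_pos_of_pos (by positivity)
  have : 0 < ∏ k ∈ Finset.range ((w + 1) / 2), ((n : ℝ) + 2 * k + 1) :=
    Finset.prod_pos fun _ _ => by positivity
  unfold normConst
  positivity

lemma normConst_succ (n w : ℕ) :
    normConst n (w + 1) =
      normConst n w * ((w + 1) * (n + 2 * w + 3) / ((n + 2 * w + 1) * (n + w + 1))) := by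
  have hdenom : 2 ^ ((w + 1) / 2) * Real.Gamma ((n : ℝ) / 2 + 1 + ((w + 1) / 2 : ℕ)) *
        ∏ k ∈ Finset.range ((w + 1 + 1) / 2), ((n : ℝ) + 2 * k + 1) =
      (n + w + 1) * (2 ^ (w / 2) * Real.Gamma ((n : ℝ) / 2 + 1 + (w / 2 : ℕ)) *
        ∏ k ∈ Finset.range ((w + 1) / 2), ((n : ℝ) + 2 * k + 1)) := by
    obtain ⟨m, rfl | rfl⟩ := Nat.even_or_odd' w
    · rw [show (2 * m + 1) / 2 = m by omega, show 2 * m / 2 = m by omega,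
        show (2 * m + 1 + 1) / 2 = m + 1 by omega, Finset.prod_range_succ]
      push_cast
      ring
    · rw [show (2 * m + 1) / 2 = m by omega, show (2 * m + 1 + 1) / 2 = m + 1 by omega,
        show (2 * m + 1 + 1 + 1) / 2 = m + 1 by omega, Nat.cast_succ m, ← add_assoc,
        Real.Gamma_add_one (by positivity)]
      push_cast
      ring
  rw [normConst, normConst, mul_assoc √Real.pi, mul_assoc √Real.pi, hdenom, mul_assoc √Real.pi,
    mul_assoc √Real.pi, Nat.factorial_succ]
  push_cast
  field_simp
  ring

/-- The factor by which the first row of `Q_w` differs from `firstRow p (C_w)`, for `n = p + q`.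
Exchanging `p` and `q` gives the factor of the second row. -/
noncomputable def rowNorm (n : ℕ) (p q : ℝ) (w : ℕ) : ℝ :=
  √(normConst n w) * √((p + w) / (p * (q + w + 1))) / ((n + 1) * (p + w))

lemma rowNorm_nonneg (hp : 0 < p) (w : ℕ) : 0 ≤ rowNorm n p q w := by
  unfold rowNorm
  positivity

lemma rowNorm_sq (hp : 0 < p) (hq : 0 < q) (w : ℕ) :
    rowNorm n p q w ^ 2 = normConst n w / (p * (p + w) * (q + w + 1) * (n + 1) ^ 2) := by
  rw [rowNorm, div_pow, mul_pow, Real.sq_sqrt (normConst_pos n w).le, Real.sq_sqrt (by positivity)]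
  field_simp

lemma sqrt_mul_eq_of_mul_sq_eq_sq {a x y : ℝ} (hx : 0 ≤ x) (hy : 0 ≤ y) (h : a * x ^ 2 = y ^ 2) :
    √a * x = y := by
  rw [← Real.sqrt_sq hy, ← h, Real.sqrt_mul' a (sq_nonneg x), Real.sqrt_sq hx]

lemma L1b_succ (hn : (n : ℝ) = p + q) (hκ : κ * (q - p) = (q + N + 1) * (p + N + 1))
    (hqp : q ≠ p) (w : ℕ) :
    L1b n p α N (w + 1) = -κ / (α * (p + 1)) *
      √(p * (p + w + 1) * (q + w) / ((q + w + 1) * (p + w) * q)) := by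
  have hqp' : q - p ≠ 0 := sub_ne_zero.2 hqp
  rw [L1b, hn, add_sub_cancel_left, ← hκ, show p + q - 2 * p = q - p by ring, neg_mul_eq_neg_mul,
    mul_div_mul_right _ _ hqp']
  push_cast
  simp only [← add_assoc, add_sub_cancel_right]

theorem L1b_succ_mul_rowNorm_swap (hp : 0 < p) (hq : 0 < q) (hn : (n : ℝ) = p + q)
    (hκ : κ * (q - p) = (q + N + 1) * (p + N + 1)) (hqp : q ≠ p) (w : ℕ) :
    L1b n p α N (w + 1) * rowNorm n q p w =
      -(p * κ) / (α * (p + 1) * q) * rowNorm n p q w := by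
  have h : √(p * (p + w + 1) * (q + w) / ((q + w + 1) * (p + w) * q)) * rowNorm n q p w =
      p / q * rowNorm n p q w := by
    refine sqrt_mul_eq_of_mul_sq_eq_sq (rowNorm_nonneg hq w)
      (mul_nonneg (by positivity) (rowNorm_nonneg hp w)) ?_
    rw [mul_pow, rowNorm_sq hp hq, rowNorm_sq hq hp]
    field_simp
  rw [L1b_succ hn hκ hqp, mul_assoc, h]
  field_simp

theorem L1b_succ_mul_rowNorm (hp : 0 < p) (hq : 0 < q) (hn : (n : ℝ) = p + q)
    (hκ : κ * (q - p) = (q + N + 1) * (p + N + 1)) (hqp : q ≠ p) (w : ℕ) :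
    L1b n p α N (w + 1) * rowNorm n p q w =
      -κ / (α * (p + 1)) * ((p + w + 1) * (q + w) / ((p + w) * (q + w + 1))) *
        rowNorm n q p w := by
  have h : √(p * (p + w + 1) * (q + w) / ((q + w + 1) * (p + w) * q)) * rowNorm n p q w =
      (p + w + 1) * (q + w) / ((p + w) * (q + w + 1)) * rowNorm n q p w := by
    refine sqrt_mul_eq_of_mul_sq_eq_sq (rowNorm_nonneg hp w)
      (mul_nonneg (by positivity) (rowNorm_nonneg hq w)) ?_
    rw [mul_pow, rowNorm_sq hp hq, rowNorm_sq hq hp]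
    field_simp
  rw [L1b_succ hn hκ hqp, mul_assoc, h, mul_assoc]

lemma L1c_succ (hn : (n : ℝ) = p + q) (hκ : κ * (q - p) = (q + N + 1) * (p + N + 1)) (w : ℕ) :
    L1c n p α N (w + 1) =
      (κ * (q - p) - p * q - (w + 1) * (w + 1 + p + q)) / (α * (p + 1) * q) *
        √((w + 1) * (q + w) * (p + w + 2) * (p + q + w + 1) /
          ((p + q + 2 * w + 1) * (p + q + 2 * w + 3) * (p + w + 1) * (q + w + 1))) := by
  rw [L1c, hn, hκ]
  push_cast
  congr 2 <;> ring_nf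

theorem L1c_succ_mul_rowNorm_succ (hp : 0 < p) (hq : 0 < q) (hn : (n : ℝ) = p + q)
    (hκ : κ * (q - p) = (q + N + 1) * (p + N + 1)) (w : ℕ) :
    L1c n p α N (w + 1) * rowNorm n q p (w + 1) =
      (κ * (q - p) - p * q - (w + 1) * (w + 1 + p + q)) / (α * (p + 1) * q) *
        ((q + w) / ((p + q + 2 * w + 1) * (q + w + 1)) * (w + 1)) * rowNorm n q p w := by
  rw [L1c_succ hn hκ, mul_assoc (_ / _), mul_assoc (_ / _)]
  congr 1
  refine sqrt_mul_eq_of_mul_sq_eq_sq (rowNorm_nonneg hq _)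
    (mul_nonneg (by positivity) (rowNorm_nonneg hq w)) ?_
  rw [mul_pow, rowNorm_sq hq hp, rowNorm_sq hq hp, normConst_succ, hn]
  push_cast
  field_simp
  ring

theorem L1c_succ_mul_rowNorm (hp : 0 < p) (hq : 0 < q) (hn : (n : ℝ) = p + q)
    (hκ : κ * (q - p) = (q + N + 1) * (p + N + 1)) (w : ℕ) :
    L1c n p α N (w + 1) * rowNorm n q p w =
      (κ * (q - p) - p * q - (w + 1) * (w + 1 + p + q)) / (α * (p + 1) * q) *
        ((p + w + 2) / ((p + q + 2 * w + 3) * (p + w + 1)) * (p + q + w + 1)) *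
          rowNorm n q p (w + 1) := by
  rw [L1c_succ hn hκ, mul_assoc (_ / _), mul_assoc (_ / _)]
  congr 1
  refine sqrt_mul_eq_of_mul_sq_eq_sq (rowNorm_nonneg hq w)
    (mul_nonneg (by positivity) (rowNorm_nonneg hq _)) ?_
  rw [mul_pow, rowNorm_sq hq hp, rowNorm_sq hq hp, normConst_succ, hn]
  push_cast
  field_simp
  ring

lemma L1c_zero (n : ℕ) (p α : ℝ) (N : ℕ) : L1c n p α N 0 = 0 := by
  simp [L1c]

lemma L1c_self_add_one (n : ℕ) (p α : ℝ) (N : ℕ) : L1c n p α N (N + 1) = 0 := by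
  simp [L1c]

end Normalization

section OrthonormalRows

open Polynomial

variable {n : ℕ} {p q α κ : ℝ} {N : ℕ}

/-- The matrix `Q_w`, for `n = p + q`, with polynomial entries. -/
noncomputable def orthoPoly (n : ℕ) (p q : ℝ) (w : ℕ) : Matrix (Fin 2) (Fin 2) ℝ[X] :=
  of ![rowNorm n p q w • firstRow p (gegenbauerPoly ((n + 1) / 2) w),
    rowNorm n q p w • secondRow q (gegenbauerPoly ((n + 1) / 2) w)]

lemma Qmat_eq_map_orthoPoly (hp : 0 < p) (hq : 0 < q) (hn : (n : ℝ) = p + q) (w : ℕ) (x : ℝ) :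
    Qmat n p w x = (orthoPoly n p q w).map (eval x) := by
  have hl : -(1 / 2) < ((n : ℝ) + 1) / 2 := by linarith
  have h₁ := geg_add_one_pred hl w x
  have h₂ := geg_add_one_pred_pred hl w x
  have hn₁ : (n : ℝ) + 1 ≠ 0 := by positivity
  rw [mul_div_cancel₀ _ two_ne_zero, show ((n : ℝ) + 1) / 2 + 1 = (n + 3) / 2 by ring,
    mul_comm, ← eq_div_iff hn₁] at h₁ h₂
  have hq' : (n : ℝ) - p = q := by linarith
  ext i j
  rw [Qmat, Smat, Matrix.smul_mul, Matrix.smul_apply, Matrix.diagonal_mul, hq', Pmat, hq',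
    geg_natCast, h₁, h₂]
  fin_cases i <;> fin_cases j <;>
    simp only [orthoPoly, rowNorm, normConst, firstRow_apply, secondRow_apply, Fin.zero_eta,
      Fin.mk_one, of_apply, map_apply, cons_val_zero, cons_val_one, cons_val_fin_one,
      Pi.smul_apply, eval_smul, smul_eq_mul, eval_add, eval_sub, eval_mul, eval_C, eval_X] <;>
    field_simp <;> ring

lemma Wmat_eq_smul_map_matrixWeight (hn : (n : ℝ) = p + q) (x : ℝ) :
    Wmat n p x = (1 - x ^ 2) ^ ((p + q) / 2 - 1) • (matrixWeight p q).map (eval x) := by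
  rw [Wmat, hn]
  congr 1
  ext i j
  fin_cases i <;> fin_cases j <;>
    simp only [matrixWeight, Fin.zero_eta, Fin.mk_one, of_apply, map_apply, cons_val_zero,
      cons_val_one, cons_val_fin_one, eval_add, eval_mul, eval_neg, eval_pow, eval_C, eval_X] <;>
    ring

/-- The rows of `Q_0, Q_1, …`, listed one after the other. -/
noncomputable def orthoRow (n : ℕ) (p q : ℝ) (r : ℕ) : Fin 2 → ℝ[X] :=
  orthoPoly n p q (r / 2) ⟨r % 2, Nat.mod_lt r two_pos⟩

lemma orthoRow_two_mul (n : ℕ) (p q : ℝ) (w : ℕ) :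
    orthoRow n p q (2 * w) =
      rowNorm n p q w • firstRow p (gegenbauerPoly ((n + 1) / 2) w) := by
  simp only [orthoRow, Nat.mul_mod_right, Nat.mul_div_cancel_left w two_pos]
  rfl

lemma orthoRow_two_mul_add_one (n : ℕ) (p q : ℝ) (w : ℕ) :
    orthoRow n p q (2 * w + 1) =
      rowNorm n q p w • secondRow q (gegenbauerPoly ((n + 1) / 2) w) := by
  simp only [orthoRow, Nat.mul_add_mod_self_left, show (2 * w + 1) / 2 = w by omega]
  rfl

theorem Mfull_apply (hp : 0 < p) (hq : 0 < q) (hn : (n : ℝ) = p + q)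
    (hα : α ∈ Set.Ioo (-1 : ℝ) 1) (r c : Fin (2 * (N + 1))) :
    Mfull n p α N r c =
      truncatedForm hp hq hα (orthoRow n p q r) (orthoRow n p q c) := by
  rw [Mfull, of_apply, Mblk, of_apply, truncatedForm_apply, weightIntegral_apply]
  refine intervalIntegral.integral_congr fun x _ => ?_
  simp only [Qmat_eq_map_orthoPoly hp hq hn, Wmat_eq_smul_map_matrixWeight hn, Matrix.mul_smul,
    Matrix.smul_apply, smul_eq_mul, Matrix.mul_apply, dotProduct, mulVec,
    Fin.sum_univ_two, map_apply, transpose_apply, orthoRow, eval_add, eval_mul]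
  ring

lemma L1_isSymm (n : ℕ) (p α : ℝ) (N : ℕ) : (L1 n p α N).IsSymm := by
  ext r s
  simp only [L1, transpose_apply, of_apply]
  split_ifs <;> first | rfl | omega | (congr 1; omega)

lemma L1_apply_of_val_eq_two_mul {i : ℕ} {r : Fin (2 * (N + 1))} (hr : r.val = 2 * i)
    (s : Fin (2 * (N + 1))) :
    L1 n p α N r s = if s.val = 2 * i + 1 then L1b n p α N (i + 1) else 0 := by
  simp only [L1, of_apply, hr]
  split_ifs <;> first | rfl | omega | (congr 1; omega)

lemma L1_apply_of_val_eq_two_mul_add_one {i : ℕ} {r : Fin (2 * (N + 1))}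
    (hr : r.val = 2 * i + 1) (s : Fin (2 * (N + 1))) :
    L1 n p α N r s = (if s.val = 2 * i + 1 then L1d n p (i + 1) else 0) +
      (if s.val = 2 * i then L1b n p α N (i + 1) else 0) +
      (if s.val = 2 * (i + 1) + 1 then L1c n p α N (i + 1) else 0) +
      (if s.val = 2 * (i - 1) + 1 then L1c n p α N i else 0) := by
  have h₁ : (2 * i + 1 + 1) / 2 = i + 1 := by omega
  simp only [L1, of_apply, hr, h₁]
  have h₀ : i = 0 → L1c n p α N i = 0 := fun h => h ▸ L1c_zero n p α N
  grind

lemma sum_L1_smul_of_val_eq_two_mul {E : Type*} [AddCommGroup E] [Module ℝ E] (y : ℕ → E) {i : ℕ}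
    {r : Fin (2 * (N + 1))} (hr : r.val = 2 * i) :
    ∑ s, L1 n p α N r s • y s = L1b n p α N (i + 1) • y (2 * i + 1) := by
  simp only [L1_apply_of_val_eq_two_mul hr, ite_smul, zero_smul]
  rw [Fin.sum_univ_eq_sum_range
    (fun s => if s = 2 * i + 1 then L1b n p α N (i + 1) • y s else 0),
    Finset.sum_ite_eq', if_pos (Finset.mem_range.2 (by omega))]

lemma sum_L1_smul_of_val_eq_two_mul_add_one {E : Type*} [AddCommGroup E] [Module ℝ E]
    (y : ℕ → E) {i : ℕ} {r : Fin (2 * (N + 1))} (hr : r.val = 2 * i + 1) :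
    ∑ s, L1 n p α N r s • y s =
      L1d n p (i + 1) • y (2 * i + 1) + L1b n p α N (i + 1) • y (2 * i) +
        L1c n p α N (i + 1) • y (2 * (i + 1) + 1) + L1c n p α N i • y (2 * (i - 1) + 1) := by
  have hsum (c : ℝ) (k : ℕ) (hc : k < 2 * (N + 1) ∨ c = 0) :
      ∑ s : Fin (2 * (N + 1)), (if s.val = k then c else 0) • y s = c • y k := by
    simp only [ite_smul, zero_smul]
    rw [Fin.sum_univ_eq_sum_range (fun s => if s = k then c • y s else 0), Finset.sum_ite_eq']
    obtain hk | rfl := hc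
    · rw [if_pos (Finset.mem_range.2 hk)]
    · rw [zero_smul, ite_self]
  have hlast : 2 * (i + 1) + 1 < 2 * (N + 1) ∨ L1c n p α N (i + 1) = 0 := by
    obtain rfl | hi : i = N ∨ i < N := by omega
    · exact Or.inr (mod_cast L1c_self_add_one n p α i)
    · exact Or.inl (by omega)
  simp only [L1_apply_of_val_eq_two_mul_add_one hr, add_smul, Finset.sum_add_distrib]
  rw [hsum _ _ (Or.inl (by omega)), hsum _ _ (Or.inl (by omega)), hsum _ _ hlast,
    hsum _ _ (Or.inl (by omega))]

theorem sum_L1_smul_orthoRow_even (hp : 0 < p) (hq : 0 < q) (hn : (n : ℝ) = p + q)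
    (hκ : κ * (q - p) = (q + N + 1) * (p + N + 1)) (hqp : q ≠ p) {i : ℕ}
    {r : Fin (2 * (N + 1))} (hr : r.val = 2 * i) :
    ∑ s, L1 n p α N r s • orthoRow n p q s =
      (-(p * κ) / (α * (p + 1) * q) * rowNorm n p q i) •
        secondRow q (gegenbauerPoly ((n + 1) / 2) i) := by
  rw [sum_L1_smul_of_val_eq_two_mul _ hr, orthoRow_two_mul_add_one, smul_smul,
    L1b_succ_mul_rowNorm_swap hp hq hn hκ hqp]

lemma L1c_smul_orthoRow_pred (hp : 0 < p) (hq : 0 < q) (hn : (n : ℝ) = p + q)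
    (hκ : κ * (q - p) = (q + N + 1) * (p + N + 1)) (i : ℕ) :
    L1c n p α N i • orthoRow n p q (2 * (i - 1) + 1) =
      (rowNorm n q p i / (α * (p + 1) * q) *
        ((κ * (q - p) - p * q - i * (i + p + q)) *
          ((p + i + 1) / ((p + q + 2 * i + 1) * (p + i))))) •
        secondRow q (gegenbauerLower ((n + 1) / 2) i) := by
  cases i with
  | zero => rw [L1c_zero, gegenbauerLower_zero, map_zero, smul_zero, zero_smul]
  | succ i =>
    have hl : -(1 / 2) < ((n : ℝ) + 1) / 2 := by linarith
    rw [Nat.add_sub_cancel, orthoRow_two_mul_add_one, smul_smul,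
      L1c_succ_mul_rowNorm hp hq hn hκ, gegenbauerLower_succ hl, ← smul_eq_C_mul, map_smul,
      smul_smul, mul_div_cancel₀ _ two_ne_zero, hn]
    congr 1
    push_cast
    ring_nf

theorem sum_L1_smul_orthoRow_odd (hp : 0 < p) (hq : 0 < q) (hn : (n : ℝ) = p + q) (hα : α ≠ 0)
    (hκ : κ * (q - p) = (q + N + 1) * (p + N + 1)) (hqp : q ≠ p) {i : ℕ}
    {r : Fin (2 * (N + 1))} (hr : r.val = 2 * i + 1) :
    ∑ s, L1 n p α N r s • orthoRow n p q s =
      (rowNorm n q p i / (α * (p + 1) * q)) •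
        commutingRow p q α κ (gegenbauerPoly ((n + 1) / 2) i) := by
  have hd : L1d n p (i + 1) = (q + i) * (p + i + 1) / ((p + 1) * q) := by
    rw [L1d, hn, add_sub_cancel_left]
    push_cast
    ring_nf
  rw [sum_L1_smul_of_val_eq_two_mul_add_one _ hr, L1c_smul_orthoRow_pred hp hq hn hκ,
    orthoRow_two_mul_add_one, orthoRow_two_mul, orthoRow_two_mul_add_one, smul_smul, smul_smul,
    smul_smul, L1b_succ_mul_rowNorm hp hq hn hκ hqp, L1c_succ_mul_rowNorm_succ hp hq hn hκ, hd,
    commutingRow_gegenbauerPoly hp hq (by rw [mul_div_cancel₀ _ two_ne_zero, hn])]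
  match_scalars <;> field_simp

theorem truncatedForm_sum_L1_smul_orthoRow_comm (hp : 0 < p) (hq : 0 < q) (hn : (n : ℝ) = p + q)
    (hα : α ∈ Set.Ioo (-1 : ℝ) 1) (hα₀ : α ≠ 0)
    (hκ : κ * (q - p) = (q + N + 1) * (p + N + 1)) (hqp : q ≠ p) (r c : Fin (2 * (N + 1))) :
    truncatedForm hp hq hα (∑ s, L1 n p α N r s • orthoRow n p q s) (orthoRow n p q c) =
      truncatedForm hp hq hα (∑ s, L1 n p α N c s • orthoRow n p q s) (orthoRow n p q r) := by
  have heven {i : ℕ} {r : Fin (2 * (N + 1))} (hr : r.val = 2 * i) :=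
    sum_L1_smul_orthoRow_even (α := α) hp hq hn hκ hqp hr
  have hodd {i : ℕ} {r : Fin (2 * (N + 1))} (hr : r.val = 2 * i + 1) :=
    sum_L1_smul_orthoRow_odd hp hq hn hα₀ hκ hqp hr
  have hodd_even {r c : Fin (2 * (N + 1))} {i j : ℕ} (hr : r.val = 2 * i + 1)
      (hc : c.val = 2 * j) :
      truncatedForm hp hq hα (∑ s, L1 n p α N r s • orthoRow n p q s) (orthoRow n p q c) =
        truncatedForm hp hq hα (∑ s, L1 n p α N c s • orthoRow n p q s) (orthoRow n p q r) := by
    rw [hodd hr, heven hc, hr, hc, orthoRow_two_mul, orthoRow_two_mul_add_one]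
    simp only [map_smul, LinearMap.smul_apply, smul_eq_mul, truncatedForm_commutingRow_firstRow]
    rw [truncatedForm_comm (secondRow q (gegenbauerPoly _ i))]
    ring
  obtain ⟨i, hr | hr⟩ := Nat.even_or_odd' r.val <;> obtain ⟨j, hc | hc⟩ := Nat.even_or_odd' c.val
  · rw [heven hr, heven hc, hr, hc, orthoRow_two_mul, orthoRow_two_mul]
    simp only [map_smul, LinearMap.smul_apply, smul_eq_mul]
    rw [truncatedForm_secondRow_firstRow_comm]
    ring
  · exact (hodd_even hc hr).symm
  · exact hodd_even hr hc
  · rw [hodd hr, hodd hc, hr, hc, orthoRow_two_mul_add_one, orthoRow_two_mul_add_one]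
    simp only [map_smul, LinearMap.smul_apply, smul_eq_mul]
    rw [truncatedForm_commutingRow_secondRow_comm]
    ring

end OrthonormalRows

/-- `L_1` commutes with `M`. -/
theorem stmt_9 (n : ℕ) (hn : 1 ≤ n) (p : ℝ) (hp : 0 < p) (hpn : p < n)
    (N : ℕ) (α : ℝ) (hα : α ∈ Set.Ioo (-1 : ℝ) 1) (hα0 : α ≠ 0)
    (hp2 : p ≠ (n : ℝ) / 2) :
    L1 n p α N * Mfull n p α N = Mfull n p α N * L1 n p α N := by
  have hq : 0 < n - p := sub_pos.2 hpn
  have hqp : n - p ≠ p := fun h => hp2 (by linarith)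
  have hn' : (n : ℝ) = p + (n - p) := (add_sub_cancel p _).symm
  have hκ := div_mul_cancel₀ ((n - p + N + 1) * (p + N + 1)) (sub_ne_zero.2 hqp)
  have hM : Mfull n p α N = of fun r c : Fin (2 * (N + 1)) =>
      truncatedForm hp hq hα (orthoRow n p (n - p) r) (orthoRow n p (n - p) c) :=
    Matrix.ext fun r c => Mfull_apply hp hq hn' hα r c
  rw [hM]
  exact (commute_gram_of_isSymm truncatedForm_isSymm (L1_isSymm n p α N)
    (truncatedForm_sum_L1_smul_orthoRow_comm hp hq hn' hα hα0 hκ hqp)).eq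
end

section
/- Let L be any real symmetric matrix of the structural form described in the context (size 2(N+1)). Then det(L) = (-1)^{N+1} · ∏_{j=1}^{N+1} (L_{2j-1,2j})². -/
open Matrix

/-- A real symmetric `2(N+1) × 2(N+1)` matrix `L` has the *structural form* if its only
possibly nonzero entries (in 1-based indexing, together with the symmetrically placed
entries) are: the even diagonal entries `L_{2j,2j}` for `j = 1, …, N+1`; the entries
`L_{2j-1,2j}` for `j = 1, …, N+1`; and the entries `L_{2j,2j+2}` for `j = 1, …, N`.
(Here indices are 0-based, so `L_{2j,2j}` is `L i i` with `i` odd, `L_{2j-1,2j}` is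
`L i (i+1)` with `i` even, and `L_{2j,2j+2}` is `L i (i+2)` with `i` odd.) -/
def StructForm (N : ℕ) (L : Matrix (Fin (2 * (N + 1))) (Fin (2 * (N + 1))) ℝ) : Prop :=
  Lᵀ = L ∧
    ∀ i j : Fin (2 * (N + 1)), i.val ≤ j.val → L i j ≠ 0 →
      (j.val = i.val ∧ i.val % 2 = 1) ∨
      (j.val = i.val + 1 ∧ i.val % 2 = 0) ∨
      (j.val = i.val + 2 ∧ i.val % 2 = 1)

/-!
List the even indices (0-based) before the odd ones. An even row or column of `L` meets only the
odd index that follows it, so the permuted matrix has the block form `[0, diag b; diag c, D]`.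
Column operations turn `[0, B; C, D]` into the block triangular `[B, 0; C + D, -C]`; hence its
determinant is `det B * det (-C)`, whatever `D` is.
-/

section Blocks

variable {n R : Type*} [Fintype n] [DecidableEq n] [CommRing R]

theorem det_fromBlocks_zero₁₁ (B C D : Matrix n n R) :
    (fromBlocks 0 B C D).det = (-1) ^ Fintype.card n * (B.det * C.det) := by
  have column_ops : fromBlocks 0 B C D * fromBlocks 1 0 1 1 * fromBlocks 1 (-1) 0 1 =
      fromBlocks B 0 (C + D) (-C) := by
    simp [fromBlocks_multiply]
  calc (fromBlocks 0 B C D).det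
      = (fromBlocks 0 B C D * fromBlocks 1 0 1 1 * fromBlocks 1 (-1) 0 1).det := by simp [det_mul]
    _ = B.det * (-C).det := by rw [column_ops, det_fromBlocks_zero₁₂]
    _ = (-1) ^ Fintype.card n * (B.det * C.det) := by rw [det_neg, mul_left_comm]

theorem det_fromBlocks_zero_diagonal_diagonal (b c : n → R) (D : Matrix n n R) :
    (fromBlocks 0 (diagonal b) (diagonal c) D).det =
      (-1) ^ Fintype.card n * ∏ i, b i * c i := by
  rw [det_fromBlocks_zero₁₁, det_diagonal, det_diagonal, Finset.prod_mul_distrib]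

end Blocks

/-- The splitting of `{0, …, 2n - 1}` by parity: the left summand enumerates the even numbers, the
right summand the odd ones. -/
def evenOddEquiv (n : ℕ) : Fin n ⊕ Fin n ≃ Fin (2 * n) where
  toFun := Sum.elim (fun j ↦ ⟨2 * j.val, by omega⟩) (fun j ↦ ⟨2 * j.val + 1, by omega⟩)
  invFun i := if i.val % 2 = 0 then .inl ⟨i.val / 2, by omega⟩ else .inr ⟨i.val / 2, by omega⟩
  left_inv := by
    rintro (j | j)
    · simp
    · simp [Nat.add_mod, Nat.mul_add_div]
  right_inv i := by
    ext
    dsimp only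
    split_ifs <;> simp only [Sum.elim_inl, Sum.elim_inr] <;> omega

@[simp]
theorem evenOddEquiv_inl {n : ℕ} (j : Fin n) :
    evenOddEquiv n (.inl j) = ⟨2 * j.val, by omega⟩ := rfl

@[simp]
theorem evenOddEquiv_inr {n : ℕ} (j : Fin n) :
    evenOddEquiv n (.inr j) = ⟨2 * j.val + 1, by omega⟩ := rfl

theorem submatrix_evenOddEquiv_eq_fromBlocks {R : Type*} [Zero R] {n : ℕ}
    (L : Matrix (Fin (2 * n)) (Fin (2 * n)) R)
    (hrow : ∀ i j, Even i.val → j.val ≠ i.val + 1 → L i j = 0)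
    (hcol : ∀ i j, Even j.val → i.val ≠ j.val + 1 → L i j = 0) :
    L.submatrix (evenOddEquiv n) (evenOddEquiv n) =
      fromBlocks 0
        (diagonal fun j ↦ L ⟨2 * j.val, by omega⟩ ⟨2 * j.val + 1, by omega⟩)
        (diagonal fun j ↦ L ⟨2 * j.val + 1, by omega⟩ ⟨2 * j.val, by omega⟩)
        (L.submatrix (evenOddEquiv n ∘ Sum.inr) (evenOddEquiv n ∘ Sum.inr)) := by
  ext (a | a) (b | b)
  · exact hrow _ _ (by simp) (by simp only [evenOddEquiv_inl]; omega)
  · obtain rfl | hab := eq_or_ne a b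
    · simp
    · simpa [hab] using hrow _ _ (by simp) (by dsimp only; omega)
  · obtain rfl | hab := eq_or_ne a b
    · simp
    · simpa [hab] using hcol _ _ (by simp) (by dsimp only; omega)
  · rfl

theorem stmt_12_general {R : Type*} [CommRing R] {n : ℕ}
    (L : Matrix (Fin (2 * n)) (Fin (2 * n)) R)
    (hrow : ∀ i j, Even i.val → j.val ≠ i.val + 1 → L i j = 0)
    (hcol : ∀ i j, Even j.val → i.val ≠ j.val + 1 → L i j = 0) :
    L.det = (-1) ^ n *
      ∏ j : Fin n, L ⟨2 * j.val, by omega⟩ ⟨2 * j.val + 1, by omega⟩ *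
        L ⟨2 * j.val + 1, by omega⟩ ⟨2 * j.val, by omega⟩ := by
  rw [← det_submatrix_equiv_self (evenOddEquiv n) L,
    submatrix_evenOddEquiv_eq_fromBlocks L hrow hcol,
    det_fromBlocks_zero_diagonal_diagonal, Fintype.card_fin]

namespace StructForm

variable {N : ℕ} {L : Matrix (Fin (2 * (N + 1))) (Fin (2 * (N + 1))) ℝ}

theorem apply_comm (hL : StructForm N L) (i j : Fin (2 * (N + 1))) : L i j = L j i :=
  IsSymm.apply hL.1 j i

theorem apply_eq_zero_of_even_left (hL : StructForm N L) (i j : Fin (2 * (N + 1)))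
    (hi : Even i.val) (hij : j.val ≠ i.val + 1) : L i j = 0 := by
  rw [Nat.even_iff] at hi
  by_contra hne
  obtain hle | hle := le_total i.val j.val
  · have := hL.2 i j hle hne
    omega
  · have := hL.2 j i hle (hL.apply_comm i j ▸ hne)
    omega

theorem apply_eq_zero_of_even_right (hL : StructForm N L) (i j : Fin (2 * (N + 1)))
    (hj : Even j.val) (hij : i.val ≠ j.val + 1) : L i j = 0 :=
  (hL.apply_comm i j).trans (hL.apply_eq_zero_of_even_left j i hj hij)

end StructForm

/-- For a matrix `L` of the structural form,
`det L = (-1)^{N+1} ∏_{j=1}^{N+1} (L_{2j-1,2j})²`. -/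
theorem stmt_12 (N : ℕ) (L : Matrix (Fin (2 * (N + 1))) (Fin (2 * (N + 1))) ℝ)
    (hL : StructForm N L) :
    L.det = (-1 : ℝ) ^ (N + 1) *
      ∏ j : Fin (N + 1),
        (L ⟨2 * j.val, by have := j.isLt; omega⟩ ⟨2 * j.val + 1, by have := j.isLt; omega⟩) ^ 2 := by
  simpa only [sq, hL.apply_comm ⟨2 * _ + 1, _⟩ ⟨2 * _, _⟩] using
    stmt_12_general L hL.apply_eq_zero_of_even_left hL.apply_eq_zero_of_even_right
end
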